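/- Let T be a weakly almost periodic operator on a complex Banach space X with σ(T) ∩ 𝕋 countable, where 𝕋 = {λ ∈ ℂ : |λ| = 1}. Then X decomposes as a direct sum X = Y ⊕ X₀ of two closed T-invariant subspaces, where Y is the closed linear span of the set of eigenvectors of T with unimodular eigenvalues, Y = clm{y ∈ X : T y = λ y for some λ with |λ| = 1}, and X₀ = {z ∈ X : ‖Tⁿ z‖ → 0}; i.e., Y ∩ X₀ = {0} and Y + X₀ = X. -/

import Mathlib

open Filter

/-!
Let `Y` be the closed span of the unimodular eigenvectors. Along a suitable filter `𝓛` on `ℕ`,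
`l ^ n → 1` for all unimodular `l` simultaneously, hence `T ^ n y → y` for `y ∈ Y`; in particular
no nonzero vector of `Y` has an orbit tending to `0`.

The orbits of the quotient operator on `X ⧸ Y` tend to `0`. Were it not so, the seminorm
`limsup ‖T ^ n x‖` would yield a nonzero Banach space on which the operator induces an isometry with
countable unimodular spectrum. An isolated point `l` of that spectrum is a simple pole of the
resolvent, whose residue supplies a nonzero functional `ψ` on `X` with `ψ ∘ T = l ψ` and `ψ = 0` on
`Y`. But averaging the weak orbit closure of `x` under `l⁻¹ T` over an invariant measure gives an
eigenvector `y ∈ Y` for `l` with `ψ y = ψ x`, so `ψ = 0`.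

Finally let `y` be the weak limit of `T ^ n x` along an ultrafilter finer than `𝓛`. Then `y ∈ Y` and
`‖x - y‖ ≤ (1 + M) * ‖x + Y‖`, where `M` bounds the powers of `T`. Applied to `T ^ m x`, whose weak
limit is `T ^ m y`, this estimate gives `T ^ m (x - y) → 0`.
-/

section ComplexAnalysis

open Asymptotics Metric Topology

theorem isBigO_sub_of_hasDerivAt {𝕜 G : Type*} [NontriviallyNormedField 𝕜] [NormedAddCommGroup G]
    [NormedSpace 𝕜 G] {f : 𝕜 → G} {f' : G} {x : 𝕜} (hf : HasDerivAt f f' x) (hf' : f' ≠ 0) :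
    (fun y => y - x) =O[𝓝 x] fun y => f y - f x :=
  (hf.isTheta_sub hf').isBigO_symm.comp_tendsto (tendsto_id.prodMk tendsto_const_pure)

theorem isBigO_sub_inv_comp {G : Type*} [Norm G] {F : ℂ → G} {ψ : ℂ → ℂ} {ψ' l : ℂ}
    (hψ : HasDerivAt ψ ψ' l) (hψ' : ψ' ≠ 0) (hψl : ψ l = 0) (hF : F =O[𝓝[≠] 0] fun z => z⁻¹) :
    (fun z => F (ψ z)) =O[𝓝[≠] l] fun z => (z - l)⁻¹ := by
  have hψne : Tendsto ψ (𝓝[≠] l) (𝓝[≠] 0) := by simpa only [hψl] using hψ.tendsto_nhdsNE hψ'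
  have hψO := (isBigO_sub_of_hasDerivAt hψ hψ').mono (nhdsWithin_le_nhds (s := {l}ᶜ))
  simp only [hψl, sub_zero] at hψO
  refine (hF.comp_tendsto hψne).trans (hψO.inv_rev ?_)
  filter_upwards [self_mem_nhdsWithin] with z hz h
  exact absurd (sub_eq_zero.1 h) hz

variable {E : Type*} [NormedAddCommGroup E] [NormedSpace ℂ E] {F : ℂ → E} {C : ℝ}

/-- On the circle `|w - a| = s` the factor `(w - a) ^ 2 - s ^ 2` has modulus `2 * s * |w.im|`, which
absorbs the singularity of `F` at the two points where the circle meets the real axis. -/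
theorem norm_sq_sub_sq_mul_norm_le {a s : ℝ} (hs : 0 < s)
    (hd : DiffContOnCl ℂ F (ball (a : ℂ) s))
    (hC : ∀ w ∈ sphere (a : ℂ) s, |w.im| * ‖F w‖ ≤ C) {z : ℂ} (hz : z ∈ ball (a : ℂ) s) :
    ‖(z - a) ^ 2 - (s : ℂ) ^ 2‖ * ‖F z‖ ≤ 2 * s * C := by
  have hsphere : ∀ w ∈ sphere (a : ℂ) s, ‖(w - a) ^ 2 - (s : ℂ) ^ 2‖ = 2 * s * |w.im| := by
    intro w hw
    rw [mem_sphere_iff_norm] at hw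
    have hsq : (w.re - a) ^ 2 + w.im ^ 2 = s ^ 2 := by
      rw [← hw, ← Complex.normSq_eq_norm_sq, Complex.normSq_apply]
      simp
      ring
    have hfactor : (w - a) ^ 2 - (s : ℂ) ^ 2 = (2 * w.im : ℝ) * Complex.I * (w - a) := by
      rw [← Complex.ofReal_pow, ← hsq]
      apply Complex.ext <;> simp [pow_two] <;> ring
    rw [hfactor, norm_mul, hw]
    simp
    ring
  rw [← norm_smul]
  have hG : DiffContOnCl ℂ (fun w : ℂ => ((w - a) ^ 2 - (s : ℂ) ^ 2) • F w) (ball (a : ℂ) s) :=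
    DiffContOnCl.smul (Differentiable.diffContOnCl (by fun_prop)) hd
  refine Complex.norm_le_of_forall_mem_frontier_norm_le isBounded_ball hG (fun w hw => ?_)
    (subset_closure hz)
  rw [frontier_ball _ hs.ne'] at hw
  rw [norm_smul, hsphere w hw, mul_assoc]
  gcongr
  exact hC w hw

theorem norm_mul_norm_le_of_abs_im_mul_norm_le {ρ : ℝ}
    (hd : ∀ z : ℂ, z ≠ 0 → ‖z‖ < ρ → DifferentiableAt ℂ F z)
    (hC : ∀ z : ℂ, z ≠ 0 → ‖z‖ < ρ → |z.im| * ‖F z‖ ≤ C) {z : ℂ} (hz₀ : z ≠ 0)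
    (hz : ‖z‖ < ρ / 2) : ‖z‖ * ‖F z‖ ≤ 4 * C := by
  have hF := norm_nonneg (F z)
  have hzpos := norm_pos_iff.2 hz₀
  have hCnonneg : 0 ≤ C := le_trans (by positivity) (hC z hz₀ (by linarith))
  have hnorm := Complex.norm_le_abs_re_add_abs_im z
  have hre := Complex.abs_re_le_norm z
  obtain him | him := le_or_gt (|z.re| / 2) |z.im|
  · nlinarith [hC z hz₀ (by linarith)]
  have hpos : 0 < |z.re| := by linarith [abs_nonneg z.im]
  set s := |z.re| * (3 / 4) with hs
  have hdisc : ∀ w ∈ closedBall (z.re : ℂ) s, w ≠ 0 ∧ ‖w‖ < ρ := by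
    intro w hw
    rw [mem_closedBall_iff_norm] at hw
    have h₁ := norm_sub_norm_le (z.re : ℂ) w
    have h₂ := norm_sub_norm_le w (z.re : ℂ)
    rw [norm_sub_rev, Complex.norm_real, Real.norm_eq_abs] at h₁
    rw [Complex.norm_real, Real.norm_eq_abs] at h₂
    exact ⟨norm_pos_iff.1 (by linarith), by linarith⟩
  have hsub : z - z.re = z.im * Complex.I := by apply Complex.ext <;> simp
  have hval : ‖(z - z.re) ^ 2 - (s : ℂ) ^ 2‖ = s ^ 2 + z.im ^ 2 := by
    have : (z - z.re) ^ 2 - (s : ℂ) ^ 2 = ((-(s ^ 2 + z.im ^ 2) : ℝ) : ℂ) := by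
      rw [hsub, mul_pow, Complex.I_sq]
      push_cast
      ring
    rw [this, Complex.norm_real, norm_neg, Real.norm_of_nonneg (by positivity)]
  have hmax := norm_sq_sub_sq_mul_norm_le (F := F) (C := C) (a := z.re) (s := s) (by positivity)
    (DifferentiableOn.diffContOnCl fun w hw =>
      have hw' := hdisc w (closure_ball_subset_closedBall hw)
      (hd w hw'.1 hw'.2).differentiableWithinAt)
    (fun w hw => have hw' := hdisc w (sphere_subset_closedBall hw); hC w hw'.1 hw'.2)
    (z := z) (by rw [mem_ball_iff_norm, hsub]; simp; linarith)
  rw [hval] at hmax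
  have hbound : s * ‖F z‖ ≤ 2 * C :=
    le_of_mul_le_mul_left (by nlinarith [mul_nonneg (sq_nonneg z.im) hF]) (by positivity : 0 < s)
  nlinarith

theorem isBigO_inv_of_abs_im_mul_norm_le (hd : ∀ᶠ z in 𝓝[≠] 0, DifferentiableAt ℂ F z)
    (hC : ∀ᶠ z in 𝓝[≠] 0, |z.im| * ‖F z‖ ≤ C) : F =O[𝓝[≠] 0] fun z => z⁻¹ := by
  obtain ⟨ρ, hρ, hball⟩ := Metric.eventually_nhds_iff.1 (eventually_nhdsWithin_iff.1 (hd.and hC))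
  replace hball (z : ℂ) (hz₀ : z ≠ 0) (hz : ‖z‖ < ρ) := hball (by rwa [dist_zero_right]) hz₀
  refine IsBigO.of_bound (4 * C) ?_
  rw [eventually_nhdsWithin_iff, Metric.eventually_nhds_iff]
  refine ⟨ρ / 2, by positivity, fun z hz (hz₀ : z ≠ 0) => ?_⟩
  rw [norm_inv, ← div_eq_mul_inv, le_div_iff₀' (norm_pos_iff.2 hz₀)]
  exact norm_mul_norm_le_of_abs_im_mul_norm_le (fun w h₀ h => (hball w h₀ h).1)
    (fun w h₀ h => (hball w h₀ h).2) hz₀ (by rwa [dist_zero_right] at hz)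

theorem isBigO_im_norm_exp_mul_I_sub_one :
    Complex.im =O[𝓝 0] fun z : ℂ => ‖Complex.exp (z * Complex.I)‖ - 1 := by
  have hexp := isBigO_sub_of_hasDerivAt (Real.hasDerivAt_exp 0) (by simp)
  have him : Tendsto (fun z : ℂ => -z.im) (𝓝 0) (𝓝 0) :=
    Complex.continuous_im.neg.tendsto' 0 0 (by simp)
  simpa [Function.comp_def, Complex.norm_exp] using hexp.comp_tendsto him

/-- The chart `z ↦ l * exp (z * I)` carries the real axis to the unit circle. -/
theorem isBigO_sub_inv_of_abs_norm_sub_one_mul_norm_le {l : ℂ} (hl : ‖l‖ = 1)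
    (hd : ∀ᶠ z in 𝓝[≠] l, DifferentiableAt ℂ F z)
    (hC : ∀ᶠ z in 𝓝[≠] l, |‖z‖ - 1| * ‖F z‖ ≤ C) : F =O[𝓝[≠] l] fun z => (z - l)⁻¹ := by
  have hl₀ : l ≠ 0 := norm_ne_zero_iff.1 (by simp [hl])
  let φ : ℂ → ℂ := fun z => l * Complex.exp (z * Complex.I)
  let ψ : ℂ → ℂ := fun z => Complex.log (z / l) * -Complex.I
  have hφ : HasDerivAt φ (l * Complex.I) 0 := by
    simpa using (((hasDerivAt_id (0 : ℂ)).mul_const Complex.I).cexp.const_mul l)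
  have hψ : HasDerivAt ψ (1 / l / (l / l) * -Complex.I) l :=
    (((hasDerivAt_id l).div_const l).clog (by simp [hl₀])).mul_const _
  have hφψ : ∀ᶠ z in 𝓝[≠] l, φ (ψ z) = z := by
    filter_upwards [eventually_ne_nhdsWithin hl₀] with z hz
    simp [φ, ψ, mul_assoc, Complex.exp_log (div_ne_zero hz hl₀), mul_div_cancel₀ z hl₀]
  have hφne : Tendsto φ (𝓝[≠] 0) (𝓝[≠] l) := by
    simpa [φ] using hφ.tendsto_nhdsNE (mul_ne_zero hl₀ Complex.I_ne_zero)
  obtain ⟨c, hc, him⟩ :=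
    (isBigO_im_norm_exp_mul_I_sub_one.mono (nhdsWithin_le_nhds (s := {0}ᶜ))).exists_nonneg
  have hpull : (fun z => F (φ z)) =O[𝓝[≠] 0] fun z => z⁻¹ := by
    refine isBigO_inv_of_abs_im_mul_norm_le (C := c * C) ?_ ?_
    · filter_upwards [hφne.eventually hd] with z hz
      exact hz.comp z (by fun_prop)
    · filter_upwards [hφne.eventually hC, him.bound] with z hz himz
      have hφnorm : ‖φ z‖ = ‖Complex.exp (z * Complex.I)‖ := by simp only [φ, norm_mul, hl, one_mul]
      rw [Real.norm_eq_abs, Real.norm_eq_abs, ← hφnorm] at himz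
      calc |z.im| * ‖F (φ z)‖ ≤ c * |‖φ z‖ - 1| * ‖F (φ z)‖ := by gcongr
        _ ≤ c * C := by rw [mul_assoc]; gcongr
  refine (isBigO_sub_inv_comp hψ (by simp [hl₀]) (by simp [ψ, hl₀]) hpull).congr' ?_ .rfl
  filter_upwards [hφψ] with z hz
  rw [hz]

end ComplexAnalysis

section Spectrum

open Asymptotics Topology

section Resolvent

variable {A : Type*} [NormedRing A] [CompleteSpace A]

theorem one_le_norm_sub_mul_norm_resolvent {𝕜 : Type*} [NontriviallyNormedField 𝕜]
    [NormedAlgebra 𝕜 A] {a : A} {z l : 𝕜} (hz : z ∈ resolventSet 𝕜 a) (hl : l ∈ spectrum 𝕜 a) :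
    1 ≤ ‖z - l‖ * ‖resolvent a z‖ := by
  by_contra! h
  have hunit : IsUnit (1 - (z - l) • resolvent a z) :=
    isUnit_one_sub_of_norm_lt_one (by rwa [norm_smul])
  refine hl (spectrum.mem_resolventSet_iff.2 ?_)
  have hfactor : algebraMap 𝕜 A l - a =
      (algebraMap 𝕜 A z - a) * (1 - (z - l) • resolvent a z) := by
    rw [mul_sub, mul_smul_comm, resolvent, Ring.mul_inverse_cancel _ hz, mul_one, sub_smul,
      Algebra.algebraMap_eq_smul_one, Algebra.algebraMap_eq_smul_one]
    abel
  rw [hfactor]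
  exact (spectrum.mem_resolventSet_iff.1 hz).mul hunit

theorem exists_ne_zero_mul_algebraMap_sub_eq_zero [NormedAlgebra ℂ A] {a : A} {l : ℂ}
    (hl : l ∈ spectrum ℂ a) (hiso : ∀ᶠ z in 𝓝[≠] l, z ∈ resolventSet ℂ a)
    (hpole : resolvent a =O[𝓝[≠] l] fun z => (z - l)⁻¹) :
    ∃ p : A, p ≠ 0 ∧ p * (algebraMap ℂ A l - a) = 0 := by
  have hdiff : ∀ᶠ z in 𝓝[≠] l, DifferentiableAt ℂ (fun z => (z - l) • resolvent a z) z := by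
    filter_upwards [hiso] with z hz
    exact .smul (differentiableAt_id.sub_const l)
      (spectrum.hasDerivAt_resolvent_const_left hz).differentiableAt
  have hbdd : IsBoundedUnder (· ≤ ·) (𝓝[≠] l)
      fun z => ‖(z - l) • resolvent a z - (l - l) • resolvent a l‖ := by
    simp only [sub_self, zero_smul, sub_zero]
    have hone : (fun z : ℂ => (z - l) • (z - l)⁻¹) =O[𝓝[≠] l] fun _ => (1 : ℝ) :=
      .of_bound 1 (.of_forall fun z => by simpa using mul_inv_le_one)
    exact (((isBigO_refl (fun z => z - l) _).smul hpole).trans hone).isBoundedUnder_le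
  have hlim := Complex.tendsto_limUnder_of_differentiable_on_punctured_nhds_of_bounded_under
    hdiff hbdd
  set p := limUnder (𝓝[≠] l) fun z => (z - l) • resolvent a z
  refine ⟨p, fun hp => ?_, ?_⟩
  · have hge : 1 ≤ ‖p‖ := by
      refine ge_of_tendsto hlim.norm ?_
      filter_upwards [hiso] with z hz
      rw [norm_smul]
      exact one_le_norm_sub_mul_norm_resolvent hz hl
    norm_num [hp] at hge
  · have hfactor : Tendsto (fun z => algebraMap ℂ A z - a) (𝓝[≠] l) (𝓝 (algebraMap ℂ A l - a)) :=
      ((continuous_algebraMap ℂ A).sub continuous_const).continuousAt.mono_left nhdsWithin_le_nhds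
    have hzero : Tendsto (fun z : ℂ => (z - l) • (1 : A)) (𝓝[≠] l) (𝓝 0) :=
      Continuous.tendsto' (by fun_prop) l 0 (by simp) |>.mono_left nhdsWithin_le_nhds
    refine tendsto_nhds_unique (hlim.mul hfactor) (hzero.congr' ?_)
    filter_upwards [hiso] with z hz
    rw [smul_mul_assoc, resolvent, Ring.inverse_mul_cancel _ hz]

end Resolvent

theorem interior_eq_empty_of_countable_frontier {E : Type*} [AddCommGroup E] [Module ℝ E]
    [TopologicalSpace E] [ContinuousAdd E] [ContinuousSMul ℝ E] (hE : 1 < Module.rank ℝ E)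
    {s : Set E} (hs : IsClosed s) (hne : s ≠ Set.univ) (hfr : (frontier s).Countable) :
    interior s = ∅ := by
  have hconn := (hfr.isConnected_compl_of_one_lt_rank hE).isPreconnected
  by_contra! hint
  have hsub : (frontier s)ᶜ ⊆ interior s := by
    refine hconn.subset_left_of_subset_union isOpen_interior hs.isOpen_compl
      (disjoint_compl_right.mono_left interior_subset) ?_ ?_
    · rw [hs.frontier_eq]
      intro x hx
      by_cases h : x ∈ s <;> simp_all
    · obtain ⟨x, hx⟩ := hint
      exact ⟨x, fun h => h.2 hx, hx⟩
  refine hne (Set.eq_univ_of_forall fun x => by_contra fun hx => hx (interior_subset (hsub ?_)))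
  exact fun h => hx (hs.frontier_subset h)

theorem exists_mem_eventually_notMem_of_countable {α : Type*} [MetricSpace α] [CompleteSpace α]
    {s : Set α} (hclosed : IsClosed s) (hne : s.Nonempty) (hs : s.Countable) :
    ∃ x ∈ s, ∀ᶠ y in 𝓝[≠] x, y ∉ s := by
  by_contra! h
  have hperfect : Perfect s := ⟨hclosed, fun x hx => accPt_iff_frequently_nhdsNE.2 (h x hx)⟩
  obtain ⟨f, hf, -, hinj⟩ := hperfect.exists_nat_bool_injection hne
  have := hs.to_subtype
  have hcard : Cardinal.mk (ℕ → Bool) ≤ Cardinal.aleph0 := Cardinal.mk_le_aleph0_iff.2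
    ((Set.injective_codRestrict fun b => hf (Set.mem_range_self b)).2 hinj).countable
  exact absurd hcard (by simp [Cardinal.aleph0_lt_continuum])

section Isometry

variable {𝕜 E : Type*} [NontriviallyNormedField 𝕜] [NormedAddCommGroup E] [NormedSpace 𝕜 E]

theorem abs_norm_sub_one_mul_norm_resolvent_le (V : E →ₗᵢ[𝕜] E) {z : 𝕜}
    (hz : z ∈ resolventSet 𝕜 V.toContinuousLinearMap) :
    |‖z‖ - 1| * ‖resolvent V.toContinuousLinearMap z‖ ≤ 1 := by
  obtain h₀ | hpos := (abs_nonneg (‖z‖ - 1)).eq_or_lt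
  · simp [← h₀]
  rw [← le_div_iff₀' hpos]
  refine ContinuousLinearMap.opNorm_le_bound _ (by positivity) fun x => ?_
  set y := resolvent V.toContinuousLinearMap z x with hy
  have hxy : z • y - V y = x := by
    simpa [Algebra.algebraMap_eq_smul_one, hy, resolvent] using
      DFunLike.congr_fun (Ring.mul_inverse_cancel _ hz) x
  rw [one_div_mul_eq_div, le_div_iff₀' hpos]
  calc |‖z‖ - 1| * ‖y‖ = |‖z • y‖ - ‖V y‖| := by
        rw [norm_smul, V.norm_map, ← abs_norm y, ← abs_mul, abs_norm, sub_one_mul]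
    _ ≤ ‖z • y - V y‖ := abs_norm_sub_norm_le _ _
    _ = ‖x‖ := by rw [hxy]

variable [CompleteSpace E]

theorem norm_eq_one_of_mem_frontier_spectrum (V : E →ₗᵢ[𝕜] E) {l : 𝕜}
    (hl : l ∈ frontier (spectrum 𝕜 V.toContinuousLinearMap)) : ‖l‖ = 1 := by
  rw [frontier_eq_closure_inter_closure, (spectrum.isClosed _).closure_eq] at hl
  have hle : ∀ z ∈ resolventSet 𝕜 V.toContinuousLinearMap, |‖z‖ - 1| ≤ ‖z - l‖ := by
    intro z hz
    have hlower := one_le_norm_sub_mul_norm_resolvent hz hl.1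
    have hupper := abs_norm_sub_one_mul_norm_resolvent_le V hz
    by_contra! hlt
    nlinarith [norm_nonneg (resolvent V.toContinuousLinearMap z), norm_nonneg (z - l)]
  have hcl : l ∈ closure (resolventSet 𝕜 V.toContinuousLinearMap) := by
    simpa [spectrum] using hl.2
  have := le_on_closure hle (by fun_prop) (by fun_prop) hcl
  simpa [sub_eq_zero] using this

end Isometry

variable {E : Type*} [NormedAddCommGroup E] [NormedSpace ℂ E] [CompleteSpace E]

theorem norm_eq_one_of_mem_spectrum (V : E →ₗᵢ[ℂ] E)
    (hσ : (spectrum ℂ V.toContinuousLinearMap ∩ {l : ℂ | ‖l‖ = 1}).Countable) {l : ℂ}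
    (hl : l ∈ spectrum ℂ V.toContinuousLinearMap) : ‖l‖ = 1 := by
  have hclosed := spectrum.isClosed (𝕜 := ℂ) V.toContinuousLinearMap
  have hfr : (frontier (spectrum ℂ V.toContinuousLinearMap)).Countable :=
    hσ.mono <| Set.subset_inter hclosed.frontier_subset
      fun _ => norm_eq_one_of_mem_frontier_spectrum V
  have hint := interior_eq_empty_of_countable_frontier (by simp) hclosed
    (spectrum.isCompact _).ne_univ hfr
  refine norm_eq_one_of_mem_frontier_spectrum V ?_
  rwa [hclosed.frontier_eq, hint, Set.sdiff_empty]

theorem exists_dual_eigenvector_of_linearIsometry [Nontrivial E] (V : E →ₗᵢ[ℂ] E)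
    (hσ : (spectrum ℂ V.toContinuousLinearMap ∩ {l : ℂ | ‖l‖ = 1}).Countable) :
    ∃ l : ℂ, ‖l‖ = 1 ∧ ∃ ψ : StrongDual ℂ E, ψ ≠ 0 ∧ ∀ x, ψ (V x) = l • ψ x := by
  have hunimod : spectrum ℂ V.toContinuousLinearMap ⊆ {l : ℂ | ‖l‖ = 1} := fun _ =>
    norm_eq_one_of_mem_spectrum V hσ
  rw [Set.inter_eq_left.2 hunimod] at hσ
  obtain ⟨l, hl, hiso⟩ := exists_mem_eventually_notMem_of_countable (spectrum.isClosed _)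
    (spectrum.nonempty V.toContinuousLinearMap) hσ
  replace hiso : ∀ᶠ z in 𝓝[≠] l, z ∈ resolventSet ℂ V.toContinuousLinearMap := by
    simpa [spectrum] using hiso
  have hpole := isBigO_sub_inv_of_abs_norm_sub_one_mul_norm_le (hunimod hl)
    (hiso.mono fun z hz => (spectrum.hasDerivAt_resolvent_const_left hz).differentiableAt)
    (hiso.mono fun z hz => abs_norm_sub_one_mul_norm_resolvent_le V hz)
  obtain ⟨p, hp, hpV⟩ := exists_ne_zero_mul_algebraMap_sub_eq_zero hl hiso hpole
  obtain ⟨x, hx⟩ := DFunLike.ne_iff.1 hp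
  obtain ⟨g, -, hg⟩ := exists_dual_vector ℂ (p x) (norm_ne_zero_iff.2 hx)
  refine ⟨l, hunimod hl, g.comp p, fun h => hx ?_, fun y => ?_⟩
  · simpa [hg] using DFunLike.congr_fun h x
  · have hpy : l • p y - p (V y) = 0 := by
      simpa [Algebra.algebraMap_eq_smul_one] using DFunLike.congr_fun hpV y
    simp [← sub_eq_zero.1 hpy]

end Spectrum

section LimitIsometry

open Topology

universe u

section LimsupSeminorm

theorem limsup_le_mul_limsup {ι : Type*} {f : Filter ι} [f.NeBot] {u v : ι → ℝ} {c : ℝ}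
    (hc : 0 ≤ c) (hu : ∀ i, 0 ≤ u i) (hv : f.IsBoundedUnder (· ≤ ·) v)
    (hv₀ : ∀ i, 0 ≤ v i) (h : ∀ i, u i ≤ c * v i) : limsup u f ≤ c * limsup v f := by
  have hcov : f.IsCoboundedUnder (· ≤ ·) v := (isBoundedUnder_of ⟨0, hv₀⟩).isCoboundedUnder_le
  have hmono : Monotone fun t : ℝ => c * t := monotone_mul_left_of_nonneg hc
  rw [hmono.map_limsup_of_continuousAt v (by fun_prop) hv hcov]
  exact limsup_le_limsup (.of_forall h) (isBoundedUnder_of ⟨0, hu⟩).isCoboundedUnder_le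
    (hmono.isBoundedUnder_le_comp hv)

variable {𝕜 X F ι : Type*} [NontriviallyNormedField 𝕜] [NormedAddCommGroup X] [NormedSpace 𝕜 X]
  [NormedAddCommGroup F] [NormedSpace 𝕜 F] {A : ι → X →L[𝕜] F} {M : ℝ}

theorem isBoundedUnder_norm_apply (hA : ∀ i, ‖A i‖ ≤ M) (f : Filter ι) (x : X) :
    f.IsBoundedUnder (· ≤ ·) fun i => ‖A i x‖ :=
  isBoundedUnder_of ⟨M * ‖x‖, fun i => (A i).le_of_opNorm_le (hA i) x⟩

/-- The seminorm `x ↦ limsup ‖A i x‖` along a filter `f` attached to a uniformly bounded family of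
operators. For the powers of an operator and `f = atTop` it vanishes exactly on the vectors whose
orbit tends to `0`. -/
noncomputable def limsupSeminorm (hA : ∀ i, ‖A i‖ ≤ M) (f : Filter ι) [f.NeBot] : Seminorm 𝕜 X :=
  Seminorm.ofSMulLE (fun x => limsup (fun i => ‖A i x‖) f) (by simp)
    (fun x y => by
      have hbdd := isBoundedUnder_norm_apply hA f
      have hcov (z : X) : f.IsBoundedUnder (· ≥ ·) fun i => ‖A i z‖ :=
        isBoundedUnder_of ⟨0, fun _ => norm_nonneg _⟩
      refine le_trans (limsup_le_limsup (.of_forall fun i => ?_) (hcov _).isCoboundedUnder_le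
        (isBoundedUnder_le_add (hbdd x) (hbdd y)))
        (limsup_add_le (hcov x) (hbdd x) (hcov y).isCoboundedUnder_le (hbdd y))
      simpa using norm_add_le (A i x) (A i y))
    (fun r x => limsup_le_mul_limsup (norm_nonneg r) (fun _ => norm_nonneg _)
      (isBoundedUnder_norm_apply hA f x) (fun _ => norm_nonneg _)
      (fun i => by simp [norm_smul]))

theorem limsupSeminorm_apply (hA : ∀ i, ‖A i‖ ≤ M) (f : Filter ι) [f.NeBot] (x : X) :
    limsupSeminorm hA f x = limsup (fun i => ‖A i x‖) f := rfl

theorem tendsto_zero_of_limsupSeminorm_eq_zero (hA : ∀ i, ‖A i‖ ≤ M) {f : Filter ι} [f.NeBot]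
    {x : X} (hx : limsupSeminorm hA f x = 0) : Tendsto (fun i => A i x) f (𝓝 0) := by
  have hbelow : f.IsBoundedUnder (· ≥ ·) fun i => ‖A i x‖ :=
    isBoundedUnder_of ⟨0, fun _ => norm_nonneg _⟩
  have habove := isBoundedUnder_norm_apply hA f x
  refine tendsto_zero_iff_norm_tendsto_zero.2 (tendsto_of_le_liminf_of_limsup_le ?_ hx.le habove
    hbelow)
  exact le_liminf_of_le habove.isCoboundedUnder_ge (.of_forall fun _ => norm_nonneg _)

theorem limsupSeminorm_apply_le_mul_norm (hA : ∀ i, ‖A i‖ ≤ M) (f : Filter ι) [f.NeBot] (x : X) :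
    limsupSeminorm hA f x ≤ M * ‖x‖ :=
  limsup_le_of_le (isBoundedUnder_of ⟨0, fun _ => norm_nonneg _⟩ :
      f.IsBoundedUnder (· ≥ ·) fun i => ‖A i x‖).isCoboundedUnder_le
    (.of_forall fun i => (A i).le_of_opNorm_le (hA i) x)

end LimsupSeminorm

theorem exists_completion_of_seminorm {𝕜 : Type*} {X : Type u} [NormedField 𝕜] [AddCommGroup X]
    [Module 𝕜 X] (q : Seminorm 𝕜 X) :
    ∃ (E : Type u) (_ : NormedAddCommGroup E) (_ : NormedSpace 𝕜 E) (_ : CompleteSpace E)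
      (e : X →ₗ[𝕜] E), DenseRange e ∧ ∀ x, ‖e x‖ = q x := by
  let _ : SeminormedAddCommGroup X := q.toAddGroupSeminorm.toSeminormedAddCommGroup
  let _ : NormedSpace 𝕜 X := { norm_smul_le := fun a b => (map_smul_eq_mul q a b).le }
  exact ⟨UniformSpace.Completion X, inferInstance, inferInstance, inferInstance,
    (UniformSpace.Completion.toComplL (𝕜 := 𝕜) (E := X)).toLinearMap,
    UniformSpace.Completion.denseRange_coe, UniformSpace.Completion.norm_coe⟩

theorem spectrum_subset_of_denseRange {𝕜 X E : Type*} [NontriviallyNormedField 𝕜]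
    [NormedAddCommGroup X] [NormedSpace 𝕜 X] [NormedAddCommGroup E] [NormedSpace 𝕜 E]
    {T : X →L[𝕜] X} {V : E →L[𝕜] E} {e : X →ₗ[𝕜] E}
    (he : DenseRange e) (hV : ∀ x, V (e x) = e (T x))
    (hlift : ∀ A : X →L[𝕜] X, Commute A T → ∃ B : E →L[𝕜] E, ∀ x, B (e x) = e (A x)) :
    spectrum 𝕜 V ⊆ spectrum 𝕜 T := by
  intro l hl hlT
  obtain ⟨u, hu⟩ := spectrum.mem_resolventSet_iff.1 hlT
  have hcomm : Commute (↑u⁻¹ : X →L[𝕜] X) T := by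
    have : Commute (u : X →L[𝕜] X) T :=
      hu ▸ Commute.sub_left (Algebra.commutes l T) (Commute.refl T)
    exact this.units_inv_left
  obtain ⟨R, hR⟩ := hlift _ hcomm
  have hu_apply (x : X) : u.val x = l • x - T x := by
    rw [hu]
    simp [Algebra.algebraMap_eq_smul_one]
  have hVe (x : X) : (algebraMap 𝕜 (E →L[𝕜] E) l - V) (e x) = e (u.val x) := by
    rw [hu_apply]
    simp [Algebra.algebraMap_eq_smul_one, hV]
  have hext {B : E →L[𝕜] E} (hB : ∀ x, B (e x) = e x) : B = 1 :=
    DFunLike.coe_injective (he.equalizer B.continuous continuous_id (funext hB))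
  refine hl (spectrum.mem_resolventSet_of_left_right_inverse (b := R) (c := R) ?_ ?_)
  · refine hext fun x => ?_
    have hux : u.val (u⁻¹.val x) = x := DFunLike.congr_fun u.mul_inv x
    rw [mul_apply_eq_comp, hR, hVe, hux]
  · refine hext fun x => ?_
    have hux : u⁻¹.val (u.val x) = x := DFunLike.congr_fun u.inv_mul x
    rw [mul_apply_eq_comp, hVe, hR, hux]

theorem exists_limit_isometry {𝕜 : Type*} {X : Type u} [NontriviallyNormedField 𝕜]
    [NormedAddCommGroup X] [NormedSpace 𝕜 X] {S : X →L[𝕜] X} {M : ℝ} (hS : ∀ n : ℕ, ‖S ^ n‖ ≤ M) :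
    ∃ (E : Type u) (_ : NormedAddCommGroup E) (_ : NormedSpace 𝕜 E) (_ : CompleteSpace E)
      (e : X →L[𝕜] E) (V : E →ₗᵢ[𝕜] E), DenseRange e ∧ (∀ x, V (e x) = e (S x)) ∧
      spectrum 𝕜 V.toContinuousLinearMap ⊆ spectrum 𝕜 S ∧
      ∀ x, e x = 0 → Tendsto (fun n => (S ^ n) x) atTop (𝓝 0) := by
  obtain ⟨E, _, _, _, e, he, hnorm⟩ := exists_completion_of_seminorm (limsupSeminorm hS atTop)
  have hlift : ∀ A : X →L[𝕜] X, Commute A S → ∃ B : E →L[𝕜] E, ∀ x, B (e x) = e (A x) := by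
    intro A hA
    refine ⟨(e ∘ₗ A.toLinearMap).extendOfNorm e,
      LinearMap.extendOfNorm_eq he ⟨‖A‖, fun x => ?_⟩⟩
    simp only [LinearMap.comp_apply, hnorm, limsupSeminorm_apply]
    refine limsup_le_mul_limsup (norm_nonneg A) (fun _ => norm_nonneg _)
      (isBoundedUnder_norm_apply hS _ x) (fun _ => norm_nonneg _) fun n => ?_
    have : (S ^ n) (A x) = A ((S ^ n) x) := DFunLike.congr_fun (hA.symm.pow_left n) x
    exact this ▸ A.le_opNorm _
  obtain ⟨V, hV⟩ := hlift S (.refl S)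
  have hiso (x : E) : ‖V x‖ = ‖x‖ := by
    refine congrFun (he.equalizer V.continuous.norm continuous_norm (funext fun x => ?_)) x
    have hshift := limsup_nat_add (fun n => ‖(S ^ n) x‖) 1
    simp only [pow_succ, mul_apply_eq_comp] at hshift
    simp only [Function.comp_apply, hV, hnorm, limsupSeminorm_apply, hshift]
  refine ⟨E, inferInstance, inferInstance, inferInstance,
    e.mkContinuous M fun x => (hnorm x).trans_le (limsupSeminorm_apply_le_mul_norm hS _ x),
    ⟨V.toLinearMap, hiso⟩, he, hV, spectrum_subset_of_denseRange he hV hlift, fun x hx => ?_⟩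
  refine tendsto_zero_of_limsupSeminorm_eq_zero hS ?_
  rw [← hnorm, norm_eq_zero]
  exact hx

/-- The Arendt–Batty–Lyubich–Vũ stability theorem. -/
theorem tendsto_pow_apply_zero_of_countable_spectrum {X : Type*} [NormedAddCommGroup X]
    [NormedSpace ℂ X] {S : X →L[ℂ] X} {M : ℝ} (hS : ∀ n : ℕ, ‖S ^ n‖ ≤ M)
    (hσ : (spectrum ℂ S ∩ {l : ℂ | ‖l‖ = 1}).Countable)
    (hdual : ∀ (l : ℂ) (ψ : StrongDual ℂ X), ‖l‖ = 1 → (∀ x, ψ (S x) = l • ψ x) → ψ = 0) (x : X) :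
    Tendsto (fun n => (S ^ n) x) atTop (𝓝 0) := by
  obtain ⟨E, _, _, _, e, V, he, hV, hspec, hzero⟩ := exists_limit_isometry hS
  refine hzero x (by_contra fun hx => ?_)
  have : Nontrivial E := ⟨⟨e x, 0, hx⟩⟩
  obtain ⟨l, hl, ψ, hψ, hψV⟩ :=
    exists_dual_eigenvector_of_linearIsometry V (hσ.mono (Set.inter_subset_inter_left _ hspec))
  have hψe : ψ.comp e = 0 := hdual l _ hl fun y => by simp [← hV, hψV]
  exact hψ (DFunLike.coe_injective
    (he.equalizer ψ.continuous continuous_const (funext (DFunLike.congr_fun hψe))))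

end LimitIsometry

section Weak

open MeasureTheory TopologicalSpace Topology

theorem stronglyMeasurable_of_measurableSet_preimage_closedBall {α E : Type*} [MeasurableSpace α]
    [PseudoMetricSpace E] {J : α → E} (hsep : IsSeparable (Set.range J))
    (hJ : ∀ (x : E) (r : ℝ), MeasurableSet (J ⁻¹' Metric.closedBall x r)) :
    StronglyMeasurable J := by
  let _ : MeasurableSpace E := borel E
  have : BorelSpace E := ⟨rfl⟩
  refine stronglyMeasurable_iff_measurable_separable.2 ⟨measurable_of_isOpen fun U hU => ?_, hsep⟩
  obtain ⟨t, -, ht, hdense⟩ := hsep.exists_countable_dense_subset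
  have hcover : J ⁻¹' U = ⋃ x ∈ t, ⋃ (n : ℕ) (_ : Metric.closedBall x (1 / (n + 1)) ⊆ U),
      J ⁻¹' Metric.closedBall x (1 / (n + 1)) := by
    refine Set.Subset.antisymm (fun a ha => ?_) (by simp +contextual [Set.preimage_mono])
    obtain ⟨ε, hε, hball⟩ := Metric.isOpen_iff.1 hU (J a) ha
    obtain ⟨n, hn⟩ := exists_nat_one_div_lt (half_pos hε)
    obtain ⟨x, hx, hdist⟩ := Metric.mem_closure_iff.1 (hdense ⟨a, rfl⟩) (1 / (n + 1))
      Nat.one_div_pos_of_nat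
    simp only [Set.mem_iUnion]
    refine ⟨x, hx, n, fun z hz => hball ?_, hdist.le⟩
    rw [Metric.mem_closedBall] at hz
    rw [Metric.mem_ball, dist_comm]
    linarith [dist_triangle (J a) x z, dist_comm x z]
  rw [hcover]
  exact .biUnion ht fun x _ => .iUnion fun n => .iUnion fun _ => hJ _ _

variable {𝕜 X : Type*} [RCLike 𝕜] [NormedAddCommGroup X] [NormedSpace 𝕜 X]

theorem continuous_dual_toWeakSpace_symm (ψ : StrongDual 𝕜 X) :
    Continuous fun z : WeakSpace 𝕜 X => ψ ((toWeakSpace 𝕜 X).symm z) :=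
  WeakBilin.eval_continuous (topDualPairing 𝕜 X).flip ψ

theorem exists_norm_le_of_isCompact_weakSpace {K : Set (WeakSpace 𝕜 X)} (hK : IsCompact K) :
    ∃ C, ∀ z ∈ K, ‖(toWeakSpace 𝕜 X).symm z‖ ≤ C := by
  let ι := NormedSpace.inclusionInDoubleDualLi 𝕜 (E := X)
  obtain ⟨C, hC⟩ := banach_steinhaus (g := fun z : K => ι ((toWeakSpace 𝕜 X).symm z)) fun ψ => by
    obtain ⟨C, hC⟩ :=
      hK.exists_bound_of_continuousOn (continuous_dual_toWeakSpace_symm ψ).continuousOn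
    exact ⟨C, fun z => hC z z.2⟩
  exact ⟨C, fun z hz => (ι.norm_map _).symm.trans_le (hC ⟨z, hz⟩)⟩

variable [NormedSpace ℝ X] [IsScalarTower ℝ 𝕜 X]

theorem isClosed_image_toWeakSpace {s : Set X} (hs : Convex ℝ s) (hclosed : IsClosed s) :
    IsClosed (toWeakSpace 𝕜 X '' s) := by
  rw [← hclosed.closure_eq, hs.toWeakSpace_closure 𝕜]
  exact isClosed_closure

theorem isSeparable_image_symm_closure_toWeakSpace {s : Set X} (hs : IsSeparable s) :
    IsSeparable ((toWeakSpace 𝕜 X).symm '' closure (toWeakSpace 𝕜 X '' s)) := by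
  have hspan : IsClosed (toWeakSpace 𝕜 X '' (Submodule.span 𝕜 s).topologicalClosure) :=
    isClosed_image_toWeakSpace
      ((Submodule.span 𝕜 s).topologicalClosure.restrictScalars ℝ).convex
      (Submodule.isClosed_topologicalClosure _)
  refine (hs.span (R := 𝕜)).closure.mono ?_
  rw [LinearEquiv.image_symm_eq_preimage]
  rintro x hx
  obtain ⟨y, hy, hyx⟩ := closure_minimal (Set.image_mono
    (Submodule.subset_span.trans (Submodule.le_topologicalClosure _))) hspan hx
  rwa [← (toWeakSpace 𝕜 X).injective hyx]

theorem stronglyMeasurable_of_continuous_toWeakSpace {α : Type*} [TopologicalSpace α]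
    [MeasurableSpace α] [OpensMeasurableSpace α] {J : α → X}
    (hJ : Continuous fun a => toWeakSpace 𝕜 X (J a)) (hsep : IsSeparable (Set.range J)) :
    StronglyMeasurable J := by
  refine stronglyMeasurable_of_measurableSet_preimage_closedBall hsep fun x r => ?_
  have hclosed := (isClosed_image_toWeakSpace (𝕜 := 𝕜) (convex_closedBall x r)
    Metric.isClosed_closedBall).preimage hJ
  convert hclosed.measurableSet using 1
  ext a
  simp

theorem integrable_symm_toWeakSpace {K : Set (WeakSpace 𝕜 X)} [MeasurableSpace K]
    [OpensMeasurableSpace K] (hK : IsCompact K) (hsep : IsSeparable ((toWeakSpace 𝕜 X).symm '' K))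
    (μ : Measure K) [IsFiniteMeasure μ] :
    Integrable (fun k : K => (toWeakSpace 𝕜 X).symm k) μ := by
  obtain ⟨C, hC⟩ := exists_norm_le_of_isCompact_weakSpace hK
  have hmeas : StronglyMeasurable fun k : K => (toWeakSpace 𝕜 X).symm k := by
    refine stronglyMeasurable_of_continuous_toWeakSpace (𝕜 := 𝕜) continuous_subtype_val ?_
    rwa [Set.image_eq_range] at hsep
  exact .of_bound hmeas.aestronglyMeasurable C (.of_forall fun k => hC k k.2)

end Weak

section MeanErgodic

open MeasureTheory Topology

theorem exists_probabilityMeasure_integral_eq_birkhoffAverage {α : Type*} [MeasurableSpace α]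
    [MeasurableSingletonClass α] (𝕜 : Type*) [RCLike 𝕜] (f : α → α) (x : α) {n : ℕ} (hn : n ≠ 0) :
    ∃ ν : ProbabilityMeasure α,
      ∀ g : α → 𝕜, ∫ a, g a ∂(ν : Measure α) = birkhoffAverage 𝕜 f g n x := by
  refine ⟨⟨(n : ENNReal)⁻¹ • ∑ k ∈ Finset.range n, Measure.dirac (f^[k] x), ⟨?_⟩⟩, fun g => ?_⟩
  · simp [ENNReal.inv_mul_cancel, hn]
  · rw [ProbabilityMeasure.coe_mk, integral_smul_measure,
      integral_finsetSum_measure fun _ _ => integrable_dirac (by finiteness)]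
    simp [birkhoffAverage, birkhoffSum, integral_dirac, RCLike.real_smul_eq_coe_mul]

/-- The Krylov–Bogolyubov theorem. -/
theorem exists_probabilityMeasure_integral_comp_eq {K : Type*} [TopologicalSpace K]
    [CompactSpace K] [T2Space K] [Nonempty K] [MeasurableSpace K] [BorelSpace K] (𝕜 : Type*)
    [RCLike 𝕜] {φ : K → K} (hφ : Continuous φ) :
    ∃ μ : ProbabilityMeasure K, ∀ g : C(K, 𝕜), ∫ k, g (φ k) ∂(μ : Measure K) = ∫ k, g k ∂μ := by
  obtain ⟨k₀⟩ := ‹Nonempty K›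
  choose ν hν using fun n : ℕ =>
    exists_probabilityMeasure_integral_eq_birkhoffAverage 𝕜 φ k₀ n.succ_ne_zero
  let 𝓥 : Ultrafilter (ProbabilityMeasure K) := (hyperfilter ℕ).map ν
  have hlim : Tendsto ν (hyperfilter ℕ) (𝓝 𝓥.lim) :=
    𝓥.le_nhds_lim
  rw [ProbabilityMeasure.tendsto_iff_forall_integral_rclike_tendsto 𝕜] at hlim
  refine ⟨𝓥.lim, fun g => sub_eq_zero.1 ?_⟩
  have hsub := (hlim (.mkOfCompact (g.comp ⟨φ, hφ⟩))).sub (hlim (.mkOfCompact g))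
  simp only [BoundedContinuousFunction.mkOfCompact_apply, hν] at hsub
  refine tendsto_nhds_unique hsub (Tendsto.mono_left ?_ Nat.hyperfilter_le_atTop)
  refine ((tendsto_birkhoffAverage_apply_sub_birkhoffAverage' 𝕜
    (isCompact_range g.continuous).isBounded φ k₀).comp (tendsto_add_atTop_nat 1)).congr fun n => ?_
  simp [birkhoffAverage, birkhoffSum, ← Function.iterate_succ_apply, Function.iterate_succ_apply']

theorem dual_eq_of_mem_weakClosure_orbit {𝕜 X : Type*} [RCLike 𝕜] [NormedAddCommGroup X]
    [NormedSpace 𝕜 X] {S : X →L[𝕜] X} {x : X} {ψ : StrongDual 𝕜 X} (hψ : ψ.comp S = ψ)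
    {z : WeakSpace 𝕜 X}
    (hz : z ∈ closure (toWeakSpace 𝕜 X '' Set.range fun n : ℕ => (S ^ n) x)) :
    ψ ((toWeakSpace 𝕜 X).symm z) = ψ x := by
  refine closure_minimal (t := {z | ψ ((toWeakSpace 𝕜 X).symm z) = ψ x}) ?_
    (isClosed_eq (continuous_dual_toWeakSpace_symm ψ) continuous_const) hz
  rintro _ ⟨_, ⟨n, rfl⟩, rfl⟩
  induction n with
  | zero => simp
  | succ n ih =>
    refine Eq.trans ?_ ih
    simpa [pow_succ'] using DFunLike.congr_fun hψ ((S ^ n) x)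

variable {𝕜 X : Type*} [RCLike 𝕜] [NormedAddCommGroup X] [NormedSpace 𝕜 X] [NormedSpace ℝ X]
  [IsScalarTower ℝ 𝕜 X] [CompleteSpace X]

theorem exists_apply_eq_self_of_isCompact_weakClosure_orbit {S : X →L[𝕜] X} {x : X}
    (hx : IsCompact (closure (toWeakSpace 𝕜 X '' Set.range fun n : ℕ => (S ^ n) x))) :
    ∃ y, S y = y ∧ ∀ ψ : StrongDual 𝕜 X, ψ.comp S = ψ → ψ y = ψ x := by
  set K := closure (toWeakSpace 𝕜 X '' Set.range fun n : ℕ => (S ^ n) x)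
  let _ : MeasurableSpace K := borel K
  have : BorelSpace K := ⟨rfl⟩
  have : CompactSpace K := isCompact_iff_compactSpace.1 hx
  have : Nonempty K := ⟨_, subset_closure ⟨x, ⟨0, by simp⟩, rfl⟩⟩
  have hmaps : Set.MapsTo (WeakSpace.map S) K K := by
    refine Set.MapsTo.closure ?_ (WeakSpace.map S).continuous
    rintro _ ⟨_, ⟨n, rfl⟩, rfl⟩
    exact ⟨_, ⟨n + 1, rfl⟩, by simp [pow_succ']; rfl⟩
  obtain ⟨μ, hμ⟩ := exists_probabilityMeasure_integral_comp_eq 𝕜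
    ((WeakSpace.map S).continuous.restrict hmaps)
  let J : K → X := fun k => (toWeakSpace 𝕜 X).symm k
  have hJ : Integrable J μ := integrable_symm_toWeakSpace hx
    (isSeparable_image_symm_closure_toWeakSpace (Set.countable_range _).isSeparable) _
  have hdual (ψ : StrongDual 𝕜 X) : ψ (∫ k, J k ∂μ) = ∫ k, ψ (J k) ∂μ :=
    (ψ.integral_comp_comm hJ).symm
  have hcont (ψ : StrongDual 𝕜 X) : Continuous fun k => ψ (J k) :=
    (continuous_dual_toWeakSpace_symm ψ).comp continuous_subtype_val
  refine ⟨∫ k, J k ∂μ, ?_, fun ψ hψ => ?_⟩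
  · refine (SeparatingDual.eq_iff_forall_dual_eq (R := 𝕜)).2 fun ψ => ?_
    exact (hdual (ψ.comp S)).trans ((hμ ⟨_, hcont ψ⟩).trans (hdual ψ).symm)
  · rw [hdual, integral_congr_ae (.of_forall fun k : K => dual_eq_of_mem_weakClosure_orbit hψ k.2)]
    simp

end MeanErgodic

section Quotient

theorem le_mul_norm_mkQ {𝕜 X : Type*} [Ring 𝕜] [SeminormedAddCommGroup X] [Module 𝕜 X]
    {Y : Submodule 𝕜 X} {z : X ⧸ Y} {a C : ℝ} (hC : 0 ≤ C)
    (h : ∀ x, Y.mkQ x = z → a ≤ C * ‖x‖) : a ≤ C * ‖z‖ := by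
  obtain rfl | hC := hC.eq_or_lt
  · obtain ⟨x, hx⟩ := Y.mkQ_surjective z
    simpa using h x hx
  · refine (div_le_iff₀' hC).1 (le_of_forall_pos_lt_add fun ε hε => ?_)
    obtain ⟨x, hx, hlt⟩ := Submodule.Quotient.norm_mk_lt z hε
    exact ((div_le_iff₀' hC).2 (h x hx)).trans_lt hlt

variable {𝕜 X : Type*} [NontriviallyNormedField 𝕜] [NormedAddCommGroup X] [NormedSpace 𝕜 X]
  {Y : Submodule 𝕜 X}

/-- The operator induced by `A` on the quotient `X ⧸ Y` by an `A`-invariant subspace `Y`. -/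
def quotientMap (A : X →L[𝕜] X) (hA : Y ≤ Y.comap A.toLinearMap) : X ⧸ Y →L[𝕜] X ⧸ Y :=
  Y.liftQL (Y.mkQL.comp A) fun y hy => by simpa using hA hy

theorem quotientMap_mkQ {A : X →L[𝕜] X} (hA : Y ≤ Y.comap A.toLinearMap) (x : X) :
    quotientMap A hA (Y.mkQ x) = Y.mkQ (A x) :=
  rfl

theorem quotientMap_pow_mkQ {A : X →L[𝕜] X} (hA : Y ≤ Y.comap A.toLinearMap) (n : ℕ) (x : X) :
    (quotientMap A hA ^ n) (Y.mkQ x) = Y.mkQ ((A ^ n) x) := by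
  induction n with
  | zero => rfl
  | succ n ih =>
    rw [pow_succ', pow_succ', mul_apply_eq_comp, ih, quotientMap_mkQ, mul_apply_eq_comp]

theorem norm_quotientMap_pow_le {A : X →L[𝕜] X} (hA : Y ≤ Y.comap A.toLinearMap) (n : ℕ) :
    ‖quotientMap A hA ^ n‖ ≤ ‖A ^ n‖ := by
  refine ContinuousLinearMap.opNorm_le_bound _ (norm_nonneg _) fun z =>
    le_mul_norm_mkQ (norm_nonneg _) ?_
  rintro x rfl
  rw [quotientMap_pow_mkQ]
  exact (Submodule.Quotient.norm_mk_le _ _).trans ((A ^ n).le_opNorm x)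

theorem spectrum_quotientMap_subset [IsClosed (Y : Set X)] {A : X →L[𝕜] X}
    (hY : ∀ B, Commute B A → Y ≤ Y.comap B.toLinearMap) :
    spectrum 𝕜 (quotientMap A (hY A (.refl A))) ⊆ spectrum 𝕜 A :=
  spectrum_subset_of_denseRange Y.mkQ_surjective.denseRange (quotientMap_mkQ (hY A (.refl A)))
    fun B hB => ⟨quotientMap B (hY B hB), quotientMap_mkQ (hY B hB)⟩

end Quotient

section WeaklyAlmostPeriodic

open Topology

variable {𝕜 X : Type*} [RCLike 𝕜] [NormedAddCommGroup X] [NormedSpace 𝕜 X]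

/-- Weakly almost periodic operators: all orbits are relatively compact in the weak topology. -/
def IsWeaklyAlmostPeriodic (T : X →L[𝕜] X) : Prop :=
  ∀ x, IsCompact (closure (toWeakSpace 𝕜 X '' Set.range fun n : ℕ => (T ^ n) x))

namespace IsWeaklyAlmostPeriodic

variable {T : X →L[𝕜] X}

theorem exists_norm_pow_le [CompleteSpace X] (hT : IsWeaklyAlmostPeriodic T) :
    ∃ M, ∀ n : ℕ, ‖T ^ n‖ ≤ M := by
  refine banach_steinhaus fun x => ?_
  obtain ⟨C, hC⟩ := exists_norm_le_of_isCompact_weakSpace (hT x)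
  exact ⟨C, fun n => hC _ (subset_closure ⟨_, ⟨n, rfl⟩, rfl⟩)⟩

theorem exists_weakLimit (hT : IsWeaklyAlmostPeriodic T) (𝒰 : Ultrafilter ℕ) (x : X) :
    ∃ y, ∀ ψ : StrongDual 𝕜 X, Tendsto (fun n => ψ ((T ^ n) x)) 𝒰 (𝓝 (ψ y)) := by
  obtain ⟨y, -, hy⟩ := (hT x).ultrafilter_le_nhds (𝒰.map fun n => toWeakSpace 𝕜 X ((T ^ n) x))
    (tendsto_principal.2 (.of_forall fun n => subset_closure ⟨_, ⟨n, rfl⟩, rfl⟩))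
  exact ⟨(toWeakSpace 𝕜 X).symm y, fun ψ =>
    ((continuous_dual_toWeakSpace_symm ψ).tendsto y).comp hy⟩

theorem smul (hT : IsWeaklyAlmostPeriodic T) {c : 𝕜} (hc : ‖c‖ ≤ 1) :
    IsWeaklyAlmostPeriodic (c • T) := by
  intro x
  refine ((isCompact_closedBall (0 : 𝕜) 1).smul_set (hT x)).closure_of_subset ?_
  rintro _ ⟨_, ⟨n, rfl⟩, rfl⟩
  refine ⟨c ^ n, ?_, _, subset_closure ⟨_, ⟨n, rfl⟩, rfl⟩, ?_⟩
  · simpa using pow_le_one₀ (norm_nonneg c) hc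
  · simp [smul_pow]

theorem exists_eigenvector [NormedSpace ℝ X] [IsScalarTower ℝ 𝕜 X] [CompleteSpace X]
    (hT : IsWeaklyAlmostPeriodic T) {l : 𝕜} (hl : ‖l‖ = 1) {ψ : StrongDual 𝕜 X}
    (hψ : ∀ x, ψ (T x) = l • ψ x) (x : X) : ∃ y, T y = l • y ∧ ψ y = ψ x := by
  have hl0 : l ≠ 0 := norm_ne_zero_iff.1 (hl ▸ one_ne_zero)
  obtain ⟨y, hy, hyψ⟩ := exists_apply_eq_self_of_isCompact_weakClosure_orbit
    (hT.smul (c := l⁻¹) (by simp [hl]) x)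
  refine ⟨y, (inv_smul_eq_iff₀ hl0).1 hy, hyψ ψ ?_⟩
  ext z
  simp [hψ, hl0]

end IsWeaklyAlmostPeriodic

end WeaklyAlmostPeriodic

section UnimodularEigenspan

open Topology

/-- The closed linear span of the eigenvectors of `T` with unimodular eigenvalues. -/
def unimodularEigenspan {𝕜 X : Type*} [NormedField 𝕜] [NormedAddCommGroup X] [NormedSpace 𝕜 X]
    (T : X →L[𝕜] X) : Submodule 𝕜 X :=
  (Submodule.span 𝕜 {y : X | ∃ lam : 𝕜, ‖lam‖ = 1 ∧ T y = lam • y}).topologicalClosure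

section NormedField

variable {𝕜 X : Type*} [NormedField 𝕜] [NormedAddCommGroup X] [NormedSpace 𝕜 X] {T : X →L[𝕜] X}

instance isClosed_unimodularEigenspan : IsClosed (unimodularEigenspan T : Set X) :=
  Submodule.isClosed_topologicalClosure _

theorem mem_unimodularEigenspan {l : 𝕜} (hl : ‖l‖ = 1) {y : X} (hy : T y = l • y) :
    y ∈ unimodularEigenspan T :=
  Submodule.le_topologicalClosure _ (Submodule.subset_span ⟨l, hl, hy⟩)

theorem unimodularEigenspan_le {p : Submodule 𝕜 X} (hp : IsClosed (p : Set X))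
    (h : ∀ (l : 𝕜) (y : X), ‖l‖ = 1 → T y = l • y → y ∈ p) : unimodularEigenspan T ≤ p :=
  Submodule.topologicalClosure_minimal _
    (Submodule.span_le.2 fun y ⟨l, hy⟩ => h l y hy.1 hy.2) hp

theorem unimodularEigenspan_le_comap {A : X →L[𝕜] X} (hA : Commute A T) :
    unimodularEigenspan T ≤ (unimodularEigenspan T).comap A.toLinearMap := by
  refine unimodularEigenspan_le (isClosed_unimodularEigenspan.preimage A.continuous)
    fun l y hl hy => mem_unimodularEigenspan hl ?_
  have hAT : A (T y) = T (A y) := DFunLike.congr_fun hA.eq y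
  simp [← hAT, hy]

end NormedField

theorem isClosed_setOfPred_tendsto_pow_apply {𝕜 X : Type*} [NontriviallyNormedField 𝕜]
    [NormedAddCommGroup X] [NormedSpace 𝕜 X] {T : X →L[𝕜] X} {M : ℝ} (hT : ∀ n : ℕ, ‖T ^ n‖ ≤ M)
    (𝓛 : Filter ℕ) {f : X → X} (hf : Continuous f) :
    IsClosed {x | Tendsto (fun n => (T ^ n) x) 𝓛 (𝓝 (f x))} :=
  Equicontinuous.isClosed_setOfPred_tendsto
    (((NormedSpace.equicontinuous_TFAE fun n : ℕ => T ^ n).out 5 1).1 (Exists.intro M hT)) hf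

theorem exists_filter_tendsto_pow_one :
    ∃ 𝓛 : Filter ℕ, 𝓛.NeBot ∧ 𝓛 ≤ atTop ∧
      ∀ l : ℂ, ‖l‖ = 1 → Tendsto (fun n => l ^ n) 𝓛 (𝓝 1) := by
  let powers : ℕ → Circle → Circle := fun n c => c ^ n
  have hcluster : MapClusterPt 1 atTop powers := mapClusterPt_one_atTop_pow (id : Circle → Circle)
  refine ⟨atTop ⊓ comap powers (𝓝 1), ?_, inf_le_left, fun l hl => ?_⟩
  · rw [inf_comm, ← map_neBot_iff powers, Filter.push_pull']
    exact hcluster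
  · have hlim : Tendsto powers (atTop ⊓ comap powers (𝓝 1)) (𝓝 1) :=
      tendsto_comap.mono_left inf_le_right
    exact (continuous_subtype_val.tendsto _).comp
      (tendsto_pi_nhds.1 hlim ⟨l, by simp [Submonoid.unitSphere, hl]⟩)

theorem tendsto_pow_apply_of_mem_unimodularEigenspan {𝕜 X : Type*} [NontriviallyNormedField 𝕜]
    [NormedAddCommGroup X] [NormedSpace 𝕜 X] {T : X →L[𝕜] X} {M : ℝ} (hT : ∀ n : ℕ, ‖T ^ n‖ ≤ M)
    {𝓛 : Filter ℕ} (h𝓛 : ∀ l : 𝕜, ‖l‖ = 1 → Tendsto (fun n => l ^ n) 𝓛 (𝓝 1)) {y : X}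
    (hy : y ∈ unimodularEigenspan T) : Tendsto (fun n => (T ^ n) y) 𝓛 (𝓝 y) := by
  let recurrent : Submodule 𝕜 X :=
    { carrier := {y | Tendsto (fun n => (T ^ n) y) 𝓛 (𝓝 y)}
      zero_mem' := by simp only [Set.mem_ofPred_eq, map_zero, tendsto_const_nhds]
      add_mem' := fun hx hy => by simpa only [Set.mem_ofPred_eq, map_add] using hx.add hy
      smul_mem' := fun c x hx => by simpa only [Set.mem_ofPred_eq, map_smul] using hx.const_smul c }
  refine unimodularEigenspan_le (p := recurrent)
    (isClosed_setOfPred_tendsto_pow_apply hT 𝓛 continuous_id) (fun l y hl hy => ?_) hy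
  have hpow (n : ℕ) : (T ^ n) y = l ^ n • y := by
    induction n with
    | zero => simp
    | succ n ih => rw [pow_succ' T, mul_apply_eq_comp, ih, map_smul, hy, smul_smul, pow_succ]
  change Tendsto (fun n => (T ^ n) y) 𝓛 (𝓝 y)
  simpa only [hpow, one_smul] using (h𝓛 l hl).smul_const y

end UnimodularEigenspan

section Splitting

open Topology

theorem tendsto_mkQ_pow_apply_zero_of_countable_spectrum {X : Type*} [NormedAddCommGroup X]
    [NormedSpace ℂ X] {Y : Submodule ℂ X} [IsClosed (Y : Set X)] {T : X →L[ℂ] X} {M : ℝ}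
    (hT : ∀ n : ℕ, ‖T ^ n‖ ≤ M) (hσ : (spectrum ℂ T ∩ {l : ℂ | ‖l‖ = 1}).Countable)
    (hY : ∀ A, Commute A T → Y ≤ Y.comap A.toLinearMap)
    (hdual : ∀ (l : ℂ) (ψ : StrongDual ℂ X), ‖l‖ = 1 → (∀ x, ψ (T x) = l • ψ x) →
      (∀ y ∈ Y, ψ y = 0) → ψ = 0) (x : X) :
    Tendsto (fun n => Y.mkQ ((T ^ n) x)) atTop (𝓝 0) := by
  have hTY : Y ≤ Y.comap T.toLinearMap := hY T (.refl T)
  have hpow (n : ℕ) : ‖quotientMap T hTY ^ n‖ ≤ M :=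
    (norm_quotientMap_pow_le hTY n).trans (hT n)
  have hspec := hσ.mono (Set.inter_subset_inter_left _ (spectrum_quotientMap_subset hY))
  have hdualY (l : ℂ) (ψ : StrongDual ℂ (X ⧸ Y)) (hl : ‖l‖ = 1)
      (hψ : ∀ z, ψ (quotientMap T hTY z) = l • ψ z) : ψ = 0 := by
    have hzero : ψ.comp Y.mkQL = 0 := hdual l _ hl (fun x => hψ (Y.mkQ x)) fun y hy => by
      simp [(Submodule.Quotient.mk_eq_zero Y).2 hy]
    exact ContinuousLinearMap.ext (Y.mkQ_surjective.forall.2 (DFunLike.congr_fun hzero))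
  simpa only [quotientMap_pow_mkQ] using
    tendsto_pow_apply_zero_of_countable_spectrum hpow hspec hdualY (Y.mkQ x)

theorem IsWeaklyAlmostPeriodic.tendsto_mkQ_pow_apply {X : Type*} [NormedAddCommGroup X]
    [NormedSpace ℂ X] [CompleteSpace X] {T : X →L[ℂ] X} (hT : IsWeaklyAlmostPeriodic T)
    (hσ : (spectrum ℂ T ∩ {l : ℂ | ‖l‖ = 1}).Countable) (x : X) :
    Tendsto (fun n => (unimodularEigenspan T).mkQ ((T ^ n) x)) atTop (𝓝 0) := by
  obtain ⟨M, hM⟩ := hT.exists_norm_pow_le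
  refine tendsto_mkQ_pow_apply_zero_of_countable_spectrum hM hσ
    (fun _ => unimodularEigenspan_le_comap) (fun l ψ hl hψ hzero => ?_) x
  ext z
  obtain ⟨y, hy, hyz⟩ := hT.exists_eigenvector hl hψ z
  exact hyz.symm.trans (hzero y (mem_unimodularEigenspan hl hy))

variable {𝕜 X : Type*} [RCLike 𝕜] [NormedAddCommGroup X] [NormedSpace 𝕜 X] {T : X →L[𝕜] X}
  {M : ℝ} {𝓛 : Filter ℕ} [𝓛.NeBot] {Y : Submodule 𝕜 X} {x y : X}

theorem norm_weakLimit_le (hT : ∀ n : ℕ, ‖T ^ n‖ ≤ M)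
    (hlim : ∀ ψ : StrongDual 𝕜 X, Tendsto (fun n => ψ ((T ^ n) x)) 𝓛 (𝓝 (ψ y))) :
    ‖y‖ ≤ M * ‖x‖ := by
  have hM : 0 ≤ M := (norm_nonneg _).trans (hT 0)
  refine NormedSpace.norm_le_dual_bound 𝕜 y (by positivity) fun ψ => ?_
  refine le_of_tendsto' (hlim ψ).norm fun n => ?_
  calc ‖ψ ((T ^ n) x)‖ ≤ ‖ψ‖ * ‖(T ^ n) x‖ := ψ.le_opNorm _
    _ ≤ ‖ψ‖ * (M * ‖x‖) := by gcongr; exact (T ^ n).le_of_opNorm_le (hT n) x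
    _ = M * ‖x‖ * ‖ψ‖ := mul_comm _ _

/-- For every representative `v` of the class of `x`, the orbit of `x - v ∈ Y` returns to `x - v`,
so `y - (x - v)` is the weak limit of the orbit of `v`. -/
theorem norm_sub_weakLimit_le (hT : ∀ n : ℕ, ‖T ^ n‖ ≤ M)
    (hY : ∀ y ∈ Y, Tendsto (fun n => (T ^ n) y) 𝓛 (𝓝 y))
    (hlim : ∀ ψ : StrongDual 𝕜 X, Tendsto (fun n => ψ ((T ^ n) x)) 𝓛 (𝓝 (ψ y))) :
    ‖x - y‖ ≤ (1 + M) * ‖Y.mkQ x‖ := by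
  have hM : 0 ≤ M := (norm_nonneg _).trans (hT 0)
  refine le_mul_norm_mkQ (by positivity) fun v hv => ?_
  have hxv : x - v ∈ Y := (Submodule.Quotient.eq Y).1 hv.symm
  have hbound : ‖y - (x - v)‖ ≤ M * ‖v‖ := norm_weakLimit_le hT fun ψ => by
    simpa using (hlim ψ).sub ((ψ.continuous.tendsto _).comp (hY _ hxv))
  calc ‖x - y‖ = ‖v - (y - (x - v))‖ := by congr 1; abel
    _ ≤ ‖v‖ + M * ‖v‖ := (norm_sub_le _ _).trans (by gcongr)
    _ = (1 + M) * ‖v‖ := by ring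

theorem tendsto_pow_apply_sub_weakLimit (hT : ∀ n : ℕ, ‖T ^ n‖ ≤ M)
    (hY : ∀ y ∈ Y, Tendsto (fun n => (T ^ n) y) 𝓛 (𝓝 y))
    (hquot : Tendsto (fun n => Y.mkQ ((T ^ n) x)) atTop (𝓝 0))
    (hlim : ∀ ψ : StrongDual 𝕜 X, Tendsto (fun n => ψ ((T ^ n) x)) 𝓛 (𝓝 (ψ y))) :
    Tendsto (fun n => (T ^ n) (x - y)) atTop (𝓝 0) := by
  have hbound := hquot.norm.const_mul (1 + M)
  rw [norm_zero, mul_zero] at hbound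
  refine squeeze_zero_norm (fun m => ?_) hbound
  rw [map_sub]
  refine norm_sub_weakLimit_le hT hY fun ψ => ?_
  have hcomm (n : ℕ) : (T ^ n) ((T ^ m) x) = (T ^ m) ((T ^ n) x) :=
    DFunLike.congr_fun (Commute.pow_pow_self T n m).eq x
  simpa only [ContinuousLinearMap.comp_apply, hcomm] using hlim (ψ.comp (T ^ m))

theorem weakLimit_mem [IsClosed (Y : Set X)] (h𝓛 : 𝓛 ≤ atTop)
    (hquot : Tendsto (fun n => Y.mkQ ((T ^ n) x)) atTop (𝓝 0))
    (hlim : ∀ ψ : StrongDual 𝕜 X, Tendsto (fun n => ψ ((T ^ n) x)) 𝓛 (𝓝 (ψ y))) : y ∈ Y := by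
  refine (Submodule.Quotient.mk_eq_zero Y).1 ?_
  refine SeparatingDual.eq_zero_of_forall_dual_eq_zero (R := 𝕜) fun ψ => ?_
  have hzero := (ψ.continuous.tendsto 0).comp (hquot.mono_left h𝓛)
  rw [map_zero] at hzero
  exact tendsto_nhds_unique (hlim (ψ.comp Y.mkQL)) hzero

end Splitting

/-- Let `T` be a weakly almost periodic operator on a complex Banach
space `X` with `σ(T) ∩ 𝕋` countable. Then `X = Y ⊕ X₀`, where `Y` is the closed linear
span of the eigenvectors of `T` with unimodular eigenvalues and
`X₀ = {z : ‖Tⁿ z‖ → 0}`: both are closed `T`-invariant subspaces, `Y ∩ X₀ = {0}`,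
and `Y + X₀ = X`. -/
theorem jdg_decomposition_of_countable_unimodular_spectrum
    {X : Type*} [NormedAddCommGroup X] [NormedSpace ℂ X] [CompleteSpace X]
    (T : X →L[ℂ] X)
    (hwap : ∀ x : X, IsCompact (closure
      (toWeakSpace ℂ X '' Set.range (fun n : ℕ => (T ^ n) x))))
    (hσ : (spectrum ℂ T ∩ {lam : ℂ | ‖lam‖ = 1}).Countable) :
    ∀ Y : Submodule ℂ X,
      Y = (Submodule.span ℂ {y : X | ∃ lam : ℂ, ‖lam‖ = 1 ∧ T y = lam • y}).topologicalClosure →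
    ∀ X₀ : Set X, X₀ = {z : X | Tendsto (fun n : ℕ => ‖(T ^ n) z‖) atTop (nhds 0)} →
      IsClosed (Y : Set X) ∧ IsClosed X₀ ∧
      (∀ y ∈ Y, T y ∈ Y) ∧ (∀ z ∈ X₀, T z ∈ X₀) ∧
      (Y : Set X) ∩ X₀ = {0} ∧
      (∀ x : X, ∃ y ∈ Y, ∃ z ∈ X₀, x = y + z) := by
  intro Y hY X₀ hX₀
  obtain rfl : Y = unimodularEigenspan T := hY
  subst hX₀
  change IsWeaklyAlmostPeriodic T at hwap
  obtain ⟨M, hM⟩ := hwap.exists_norm_pow_le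
  obtain ⟨𝓛, _, h𝓛, hpow⟩ := exists_filter_tendsto_pow_one
  have hrec {y : X} : y ∈ unimodularEigenspan T → Tendsto (fun n => (T ^ n) y) 𝓛 (nhds y) :=
    tendsto_pow_apply_of_mem_unimodularEigenspan hM hpow
  simp only [← tendsto_zero_iff_norm_tendsto_zero]
  refine ⟨isClosed_unimodularEigenspan, isClosed_setOfPred_tendsto_pow_apply hM _ continuous_const,
    fun y hy => unimodularEigenspan_le_comap (.refl T) hy,
    fun z hz => (hz.comp (tendsto_add_atTop_nat 1)).congr fun n => by simp, ?_,
    fun x => ?_⟩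
  · refine Set.Subset.antisymm ?_ (by simp)
    exact fun y ⟨hyY, hy⟩ => tendsto_nhds_unique (hrec hyY) (hy.mono_left h𝓛)
  · obtain ⟨y, hy⟩ := hwap.exists_weakLimit (.of 𝓛) x
    have hquot := hwap.tendsto_mkQ_pow_apply hσ x
    have hle : ((Ultrafilter.of 𝓛 : Ultrafilter ℕ) : Filter ℕ) ≤ 𝓛 := Ultrafilter.of_le 𝓛
    exact ⟨y, weakLimit_mem (hle.trans h𝓛) hquot hy, x - y,
      tendsto_pow_apply_sub_weakLimit hM (fun _ h => (hrec h).mono_left hle) hquot hy, by abel⟩
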